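/- arXiv:2603.20938 — 2 statements merged into one kernel-verified Lean document; each statement's English description precedes it below -/
import Mathlib

section
/- For all natural numbers k and p with 1 ≤ k < p, there is no function g : ℝ^p → ℝ^k that is both continuous and injective. -/
/-!
Suppose `g : ℝ^p → ℝ^k` is continuous and injective with `k < p`. On the closed unit ball `g` is a
closed embedding, so by Tietze its inverse extends to a continuous map `h : ℝ^k → ℝ^p`, and `h` is
uniformly approximated by a `C¹` map `q`. Since `k < p`, the range of `q` has dense complement, so
`q` misses some `c` close to `0`. Then `x ↦ q (g x) - c` is a continuous map, close to the identity
on the ball, that never vanishes, contradicting the Brouwer-type statement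
`exists_zero_of_near_id`.

That statement reduces to the absence of a `C¹` retraction `r` of the unit ball onto its sphere
(`no_retraction_C1`), proved by the Milnor–Rogers volume argument. Put `u = r - id`, which vanishes
on the sphere. For small `t > 0` the map `id + t u` is a bijection of the ball onto itself with
positive Jacobian, so `∫ det (1 + t Du)` over the ball equals the volume of the ball. This integral
is polynomial in `t`, so the equality persists at `t = 1`; but there `1 + Du = Dr` is singular,
because `r` has values in the sphere. Polynomiality is used in the form of a Lagrange
extrapolation formula (`exists_quadrature`) applied pointwise to `det (1 + t Du(x))`, so that no
regularity of the coefficients in `x` has to be discussed.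
-/

open MeasureTheory Metric Set Polynomial
open scoped NNReal ENNReal

/-- Extrapolation: the value at `1` of a polynomial of degree at most `n` is a fixed linear
combination of its values at suitable nodes in `(0, ε)`. -/
theorem exists_quadrature (n : ℕ) {ε : ℝ} (hε : 0 < ε) :
    ∃ (s : Finset ℝ) (c : ℝ → ℝ), (∀ t ∈ s, 0 < t ∧ t < ε) ∧ ∑ t ∈ s, c t = 1 ∧
      ∀ P : ℝ[X], P.natDegree ≤ n → P.eval 1 = ∑ t ∈ s, c t * P.eval t := by
  obtain ⟨s, hs, hcard⟩ := (Set.Ioo_infinite hε).exists_subset_card_eq (n + 1)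
  have key : ∀ P : ℝ[X], P.natDegree ≤ n →
      P.eval 1 = ∑ t ∈ s, (Lagrange.basis s id t).eval 1 * P.eval t := by
    intro P hP
    have hdeg : P.degree < s.card := by
      rw [hcard]
      exact degree_le_natDegree.trans_lt (by exact_mod_cast Nat.lt_succ_of_le hP)
    conv_lhs => rw [Lagrange.eq_interpolate (v := id) Function.injective_id.injOn hdeg]
    simp [Lagrange.interpolate_apply, eval_finsetSum, mul_comm]
  refine ⟨s, fun t => (Lagrange.basis s id t).eval 1, fun t ht => hs ht, ?_, key⟩
  simpa using (key 1 (by simp)).symm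

section
variable {E : Type*} [NormedAddCommGroup E] [InnerProductSpace ℝ E]

theorem exists_polynomial_det [FiniteDimensional ℝ E] (A : E →L[ℝ] E) :
    ∃ P : ℝ[X], P.natDegree ≤ Module.finrank ℝ E ∧
      ∀ t : ℝ, P.eval t = (ContinuousLinearMap.id ℝ E + t • A).det := by
  let b := Module.finBasis ℝ E
  let M := LinearMap.toMatrix b b (A : E →ₗ[ℝ] E)
  refine ⟨Matrix.det ((X : ℝ[X]) • M.map C + (1 : Matrix _ _ ℝ).map C), ?_, fun t => ?_⟩
  · simpa using Polynomial.natDegree_det_X_add_C_le M 1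
  · rw [← coe_evalRingHom, RingHom.map_det, ContinuousLinearMap.det, ← LinearMap.det_toMatrix b]
    congr 1
    ext i j
    simp [M, LinearMap.toMatrix_apply, Matrix.one_apply, Finsupp.single_apply, add_comm, eq_comm,
      apply_ite]
    ring

/-- Extending by zero a Lipschitz map on the unit ball that vanishes on the sphere preserves the
Lipschitz constant: a segment leaving the ball crosses the sphere. -/
theorem lipschitz_extend {u : E → E} {L : ℝ≥0} (hu : LipschitzOnWith L u (closedBall 0 1))
    (h0 : ∀ x, ‖x‖ = 1 → u x = 0) :
    LipschitzWith L ((closedBall (0 : E) 1).indicator u) := by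
  have key : ∀ x y : E, ‖x‖ ≤ 1 → ¬ ‖y‖ ≤ 1 → ‖u x‖ ≤ L * ‖x - y‖ := by
    intro x y hx hy
    -- a point where the segment from `x` to `y` crosses the unit sphere
    obtain ⟨s, hs, hs1⟩ : ∃ s ∈ Icc (0 : ℝ) 1, ‖x + s • (y - x)‖ = 1 := by
      have hc : ContinuousOn (fun s : ℝ => ‖x + s • (y - x)‖) (Icc 0 1) := by fun_prop
      have := intermediate_value_Icc zero_le_one hc
      exact this ⟨by simpa using hx, by simpa using (not_le.1 hy).le⟩
    have h := hu.norm_sub_le (x := x) (y := x + s • (y - x)) (by simpa using hx)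
      (by simp [hs1])
    rw [h0 _ hs1, sub_zero] at h
    refine h.trans ?_
    gcongr
    rw [show x - (x + s • (y - x)) = s • (x - y) by module, norm_smul, Real.norm_of_nonneg hs.1]
    exact mul_le_of_le_one_left (norm_nonneg _) hs.2
  refine lipschitzWith_iff_norm_sub_le.2 fun x y => ?_
  by_cases hx : ‖x‖ ≤ 1 <;> by_cases hy : ‖y‖ ≤ 1
  · simpa [indicator, hx, hy] using hu.norm_sub_le (x := x) (y := y) (by simpa) (by simpa)
  · simpa [indicator, hx, hy] using key x y hx hy
  · simpa [indicator, hx, hy, norm_sub_rev] using key y x hy hx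
  · simp [indicator, hx, hy]; positivity

/-- If `u` vanishes on the unit sphere, a small multiple `t • u` perturbs the identity to a bijection
of the unit ball: extended by zero, `id + t u` is a bijection of the whole space that is the
identity off the ball. -/
theorem image_ball_perturb [FiniteDimensional ℝ E] [Nontrivial E] {u : E → E} {L : ℝ≥0}
    (hu : LipschitzOnWith L u (closedBall 0 1))
    (h0 : ∀ x, ‖x‖ = 1 → u x = 0) {t : ℝ} (ht : 0 < t) (htL : t * L < 1) :
    InjOn (fun x => x + t • u x) (closedBall 0 1) ∧
      (fun x => x + t • u x) '' closedBall 0 1 = closedBall 0 1 := by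
  set v := (closedBall (0 : E) 1).indicator u with hv
  have hvL : LipschitzWith L v := lipschitz_extend hu h0
  have happ : ApproximatesLinearOn (fun x => x + t • v x)
      ((ContinuousLinearEquiv.refl ℝ E : E ≃L[ℝ] E) : E →L[ℝ] E) univ (t.toNNReal * L) := by
    rw [ApproximatesLinearOn.approximatesLinearOn_iff_lipschitzOnWith]
    refine lipschitzOnWith_iff_norm_sub_le.2 fun x _ y _ => ?_
    simp only [Pi.sub_apply, ContinuousLinearEquiv.coe_coe, ContinuousLinearEquiv.refl_apply,
      add_sub_cancel_left, ← smul_sub, norm_smul, NNReal.coe_mul, Real.coe_toNNReal _ ht.le,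
      Real.norm_of_nonneg ht.le, mul_assoc]
    gcongr
    exact hvL.norm_sub_le x y
  have hc : Subsingleton E ∨ t.toNNReal * L <
      ‖((ContinuousLinearEquiv.refl ℝ E).symm : E →L[ℝ] E)‖₊⁻¹ := by
    right
    have : ‖((ContinuousLinearEquiv.refl ℝ E).symm : E →L[ℝ] E)‖₊ = 1 := by
      ext
      exact ContinuousLinearMap.norm_id
    rw [this, inv_one, ← NNReal.coe_lt_coe]
    simpa [ht.le] using htL
  have hinj := happ.injOn hc
  have hsurj := happ.surjective hc
  have hin : ∀ x ∈ closedBall (0 : E) 1, x + t • u x = x + t • v x := fun x hx => by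
    simp [hv, hx]
  have hout : ∀ x ∉ closedBall (0 : E) 1, x + t • v x = x := fun x hx => by
    simp [hv, indicator_of_notMem hx]
  refine ⟨fun x hx y hy hxy => hinj (mem_univ _) (mem_univ _) ?_, ?_⟩
  · simpa only [hin x hx, hin y hy] using hxy
  · apply Subset.antisymm
    · rintro _ ⟨x, hx, rfl⟩
      by_contra hy
      simp only [hin x hx] at hy
      have := hinj (mem_univ x) (mem_univ _) (hout _ hy).symm
      exact hy (this ▸ hx)
    · intro y hy
      obtain ⟨x, hx⟩ := hsurj y
      have hxb : x ∈ closedBall (0 : E) 1 := by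
        by_contra h
        have := hout x h
        simp only [this] at hx
        exact h (hx ▸ hy)
      exact ⟨x, hxb, by simpa only [hin x hxb] using hx⟩

/-- There is no `C¹` retraction of the unit ball onto the unit sphere. For convenience the map is
defined, with values in the sphere, on the whole space. -/
theorem no_retraction_C1 [FiniteDimensional ℝ E] [MeasurableSpace E] [BorelSpace E]
    (r : E → E) (hr : ContDiff ℝ 1 r) (h1 : ∀ x, ‖r x‖ = 1) (h2 : ∀ x, ‖x‖ = 1 → r x = x) : False := by
  have hnt : Nontrivial E := ⟨r 0, 0, fun h => by simpa [h] using h1 0⟩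
  set u : E → E := fun x => r x - x with hudef
  have hu : ContDiff ℝ 1 u := hr.sub contDiff_id
  have hA : Continuous (fderiv ℝ u) := hu.continuous_fderiv one_ne_zero
  obtain ⟨L, hL⟩ := (isCompact_closedBall (0 : E) 1).exists_bound_of_continuousOn hA.continuousOn
  have hL0 : 0 ≤ L := (norm_nonneg _).trans (hL 0 (by simp))
  lift L to ℝ≥0 using hL0
  have huL : LipschitzOnWith L u (closedBall 0 1) :=
    (convex_closedBall (0 : E) 1).lipschitzOnWith_of_nnnorm_fderiv_le
      (fun x _ => hu.differentiable one_ne_zero x) fun x hx => by exact_mod_cast hL x hx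
  have hu0 : ∀ x, ‖x‖ = 1 → u x = 0 := fun x hx => by simp [hudef, h2 x hx]
  obtain ⟨δ, hδ, hdet⟩ : ∃ δ > 0, ∀ B : E →L[ℝ] E,
      ‖B - ContinuousLinearMap.id ℝ E‖ < δ → 0 < B.det := by
    have hc : Continuous fun B : E →L[ℝ] E => B.det := ContinuousLinearMap.continuous_det
    have hm : {B : E →L[ℝ] E | 0 < B.det} ∈ nhds (ContinuousLinearMap.id ℝ E) :=
      (isOpen_lt continuous_const hc).mem_nhds (by simp [ContinuousLinearMap.det])
    obtain ⟨δ, hδ, h⟩ := Metric.mem_nhds_iff.1 hm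
    exact ⟨δ, hδ, fun B hB => h (by simpa [dist_eq_norm] using hB)⟩
  set ε : ℝ := min 1 δ / (L + 1) with hε
  have hεpos : 0 < ε := by positivity
  have hεL : ∀ t, 0 < t → t < ε → t * L < min 1 δ := fun t ht hte => by
    rw [hε, lt_div_iff₀ (by positivity)] at hte
    nlinarith
  set V : ℝ := volume.real (closedBall (0 : E) 1) with hV
  have hVpos : 0 < V := by
    refine ENNReal.toReal_pos ?_ measure_closedBall_lt_top.ne
    exact (measure_closedBall_pos volume (0 : E) one_pos).ne'
  have hsmall : ∀ t, 0 < t → t < ε → ∫ x in closedBall (0 : E) 1,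
      (ContinuousLinearMap.id ℝ E + t • fderiv ℝ u x).det = V := by
    intro t ht hte
    obtain ⟨hinj, him⟩ := image_ball_perturb huL hu0 ht ((hεL t ht hte).trans_le (min_le_left _ _))
    have hcv := integral_image_eq_integral_abs_det_fderiv_smul volume
      (measurableSet_closedBall (x := (0 : E)) (ε := 1))
      (f' := fun x => ContinuousLinearMap.id ℝ E + t • fderiv ℝ u x)
      (fun x _ => ((hasFDerivAt_id x).add
        ((hu.differentiable one_ne_zero x).hasFDerivAt.const_smul t)).hasFDerivWithinAt)
      hinj (fun _ => (1 : ℝ))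
    change ∫ x in (fun x => x + t • u x) '' closedBall 0 1, (1 : ℝ) = _ at hcv
    rw [him] at hcv
    simp only [smul_eq_mul, mul_one] at hcv
    rw [setIntegral_const, smul_eq_mul, mul_one] at hcv
    rw [hV, hcv]
    refine setIntegral_congr_fun measurableSet_closedBall fun x hx => ?_
    refine (abs_of_pos (hdet _ ?_)).symm
    rw [add_sub_cancel_left, norm_smul, Real.norm_of_nonneg ht.le]
    calc t * ‖fderiv ℝ u x‖ ≤ t * L := by gcongr; exact hL x hx
      _ < min 1 δ := hεL t ht hte
      _ ≤ δ := min_le_right _ _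
  obtain ⟨s, c, hs, hc1, hquad⟩ := exists_quadrature (Module.finrank ℝ E) hεpos
  -- at `t = 1` the derivative is that of `r`, whose range is orthogonal to `r x`
  have hzero : ∀ x, (ContinuousLinearMap.id ℝ E + (1 : ℝ) • fderiv ℝ u x).det = 0 := by
    intro x
    have hd : ContinuousLinearMap.id ℝ E + (1 : ℝ) • fderiv ℝ u x = fderiv ℝ r x := by
      have : fderiv ℝ u x = fderiv ℝ r x - ContinuousLinearMap.id ℝ E := by
        rw [hudef, fderiv_fun_sub (hr.differentiable one_ne_zero x) differentiableAt_fun_id,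
          fderiv_fun_id]
      rw [this]; simp
    rw [hd]
    by_contra hne
    have horth : ∀ v, inner ℝ (r x) (fderiv ℝ r x v) = 0 := by
      intro v
      have hrd := (hr.differentiable one_ne_zero x).hasFDerivAt
      have h3 := hrd.norm_sq
      have h4 : HasFDerivAt (fun y => ‖r y‖ ^ 2) (0 : E →L[ℝ] ℝ) x := by
        simp only [h1]; exact hasFDerivAt_const _ _
      have := congrArg (fun T => T v) (h3.unique h4)
      simpa using this
    have hsurj : Function.Surjective (fderiv ℝ r x) := by
      have := (LinearMap.equivOfDetNeZero (fderiv ℝ r x : E →ₗ[ℝ] E) hne).surjective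
      exact this
    obtain ⟨v, hv⟩ := hsurj (r x)
    have := horth v
    rw [hv, real_inner_self_eq_norm_sq, h1] at this
    norm_num at this
  have hInt : ∀ t : ℝ, IntegrableOn (fun x => (ContinuousLinearMap.id ℝ E + t • fderiv ℝ u x).det)
      (closedBall (0 : E) 1) := fun t =>
    (ContinuousLinearMap.continuous_det.comp
      (continuous_const.add (hA.const_smul t))).continuousOn.integrableOn_compact
      (isCompact_closedBall _ _)
  have hcontra : (0 : ℝ) = V := by
    calc
      (0 : ℝ) = ∫ x in closedBall (0 : E) 1,
          (ContinuousLinearMap.id ℝ E + (1 : ℝ) • fderiv ℝ u x).det := by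
          simp only [hzero, integral_zero]
      _ = ∫ x in closedBall (0 : E) 1, ∑ t ∈ s,
          c t * (ContinuousLinearMap.id ℝ E + t • fderiv ℝ u x).det := by
        congr 1; ext x
        obtain ⟨P, hP, hPe⟩ := exists_polynomial_det (fderiv ℝ u x)
        simp only [← hPe]
        exact hquad P hP
      _ = ∑ t ∈ s, c t * V := by
        rw [integral_finsetSum _ fun t _ => (hInt t).const_mul (c t)]
        refine Finset.sum_congr rfl fun t ht => ?_
        rw [integral_const_mul, hsmall t (hs t ht).1 (hs t ht).2]
      _ = V := by rw [← Finset.sum_mul, hc1, one_mul]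
  exact hVpos.ne hcontra

/-- A nowhere vanishing `f` could be replaced by a nearby `C¹` map, glued by a bump function to the
identity near the sphere, and normalized to a retraction onto the sphere. -/
theorem exists_zero_of_near_id [FiniteDimensional ℝ E] [MeasurableSpace E] [BorelSpace E]
    (f : E → E) (hf : Continuous f)
    (hclose : ∀ x ∈ closedBall (0 : E) 1, ‖f x - x‖ < 1 / 4) :
    ∃ x ∈ closedBall (0 : E) 1, f x = 0 := by
  by_contra! hne
  obtain ⟨δ, hδ, hfδ⟩ : ∃ δ > 0, ∀ x ∈ closedBall (0 : E) 1, δ ≤ ‖f x‖ := by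
    obtain ⟨x, hx, hmin⟩ := (isCompact_closedBall (0 : E) 1).exists_isMinOn ⟨0, by simp⟩
      hf.norm.continuousOn
    exact ⟨‖f x‖, norm_pos_iff.2 (hne x hx), hmin⟩
  obtain ⟨q, hq, hqf, -⟩ := hf.exists_contDiff_approx 1 (ε := fun _ => min δ (1 / 4))
    continuous_const (fun _ => by positivity)
  have hqf' : ∀ x, ‖q x - f x‖ < min δ (1 / 4) := fun x => by simpa [dist_eq_norm] using hqf x
  let χ : ContDiffBump (0 : E) := ⟨1 / 2, 1, by norm_num, by norm_num⟩
  set F : E → E := fun x => x + χ x • (q x - x) with hF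
  have hFc : ContDiff ℝ 1 F := contDiff_id.add (χ.contDiff.smul (hq.sub contDiff_id))
  have hFne : ∀ x, F x ≠ 0 := by
    intro x hx
    rcases le_or_gt ‖x‖ (1 / 2) with h | h
    · have hxb : x ∈ closedBall (0 : E) 1 := by simpa using h.trans (by norm_num)
      have hχ : χ x = 1 := χ.one_of_mem_closedBall (mem_closedBall_zero_iff.2 h)
      have hq0 : q x = 0 := by simpa [hF, hχ] using hx
      have := (hqf' x).trans_le (min_le_left _ _)
      rw [hq0, zero_sub, norm_neg] at this
      exact absurd this (not_lt.2 (hfδ x hxb))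
    · rcases le_or_gt ‖x‖ 1 with h' | h'
      · have hxb : x ∈ closedBall (0 : E) 1 := by simpa using h'
        have hx' : x = -(χ x • (q x - x)) := eq_neg_of_add_eq_zero_left hx
        have hn : ‖x‖ ≤ ‖q x - x‖ := by
          conv_lhs => rw [hx']
          rw [norm_neg, norm_smul, Real.norm_of_nonneg χ.nonneg]
          exact mul_le_of_le_one_left (norm_nonneg _) χ.le_one
        have h3 := norm_sub_le_norm_sub_add_norm_sub (q x) (f x) x
        have h4 := (hqf' x).trans_le (min_le_right _ _)
        have h5 := hclose x hxb
        linarith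
      · have hχ : χ x = 0 := χ.zero_of_le_dist (by simpa using h'.le)
        have : x = 0 := by simpa [hF, hχ] using hx
        simp [this] at h'
        linarith
  refine no_retraction_C1 (fun x => ‖F x‖⁻¹ • F x)
    (((hFc.norm ℝ hFne).inv fun x => norm_ne_zero_iff.2 (hFne x)).smul hFc) (fun x => ?_)
    fun x hx => ?_
  · simp [norm_smul, hFne x]
  · have hχ : χ x = 0 := χ.zero_of_le_dist (by simpa using hx.ge)
    simp [hF, hχ, hx]

end

/-- For all natural numbers `k` and `p` with `1 ≤ k < p`, there is no function
`g : ℝ^p → ℝ^k` that is both continuous and injective. -/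
theorem stmt_0 (k p : ℕ) (hk : 1 ≤ k) (hkp : k < p) :
    ¬ ∃ g : EuclideanSpace ℝ (Fin p) → EuclideanSpace ℝ (Fin k),
      Continuous g ∧ Function.Injective g := by
  rintro ⟨g, hg, hinj⟩
  set B := closedBall (0 : EuclideanSpace ℝ (Fin p)) 1 with hB
  have hBc : CompactSpace B := isCompact_iff_compactSpace.1 (isCompact_closedBall _ _)
  have hemb : Topology.IsClosedEmbedding (fun x : B => g x) :=
    (hg.comp continuous_subtype_val).isClosedEmbedding (hinj.comp Subtype.val_injective)
  obtain ⟨h, hh⟩ := ContinuousMap.exists_extension' hemb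
    (⟨Subtype.val, continuous_subtype_val⟩ : C(B, EuclideanSpace ℝ (Fin p)))
  obtain ⟨q, hq, hqh, -⟩ := h.continuous.exists_contDiff_approx 1 (ε := fun _ => 1 / 8)
    continuous_const (fun _ => by norm_num)
  have hdense := ContDiff.dense_compl_range_of_finrank_lt_finrank hq (by simpa using hkp)
  obtain ⟨c, hc, hc0⟩ := hdense.exists_dist_lt 0 (ε := 1 / 8) (by norm_num)
  obtain ⟨x, -, hx⟩ := exists_zero_of_near_id (fun x => q (g x) - c)
    ((hq.continuous.comp hg).sub continuous_const) (fun x hx => by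
      have h1 : h (g x) = x := congrFun hh ⟨x, hx⟩
      have h2 := hqh (g x)
      rw [h1, dist_eq_norm] at h2
      rw [dist_zero_left] at hc0
      calc ‖q (g x) - c - x‖ = ‖(q (g x) - x) - c‖ := by congr 1; abel
        _ ≤ ‖q (g x) - x‖ + ‖c‖ := norm_sub_le _ _
        _ < 1 / 4 := by linarith)
  exact hc ⟨g x, sub_eq_zero.1 hx⟩
end

section
/- Let X be the real (r+m)×(s+q) block matrix X = [[A, B],[C, D]], where A is r×s, B is r×q, C is m×s, and D is m×q. Suppose rank(X) = k and rank(D) = k. Then for every q×m real matrix Z satisfying D Z D = D (in particular, for the Moore–Penrose pseudoinverse of D), one has A = B Z C. -/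
open Matrix

/-!
The ranks of `D`, of the bottom block row `[C, D]` and of `X` increase in this order, so all three
equal `k`. Hence the left kernels of `D` and `[C, D]` agree, and so do the right kernels of
`[C, D]` and `X` (`mul_eq_zero_of_rank_le`). Since `(1 - D Z) D = 0`, the first equality gives
`C = D Z C`. Thus `[C, D]` kills the block column with entries `1` and `-Z C`; by the second
equality `[A, B]` kills it too, which says `A = B Z C`.
-/

/-- If the kernel of `M` is contained in that of `N` and `rank M ≤ rank N`, then by rank-nullity
the kernels coincide, so `N * V = 0` forces `M * V = 0`. -/
theorem mul_eq_zero_of_rank_le {a b c d : Type*} [Fintype b] [Finite a] [Finite c]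
    (M : Matrix a b ℝ) (N : Matrix c b ℝ) (hker : ∀ v, M *ᵥ v = 0 → N *ᵥ v = 0)
    (hrank : M.rank ≤ N.rank) (V : Matrix b d ℝ) (hV : N * V = 0) : M * V = 0 := by
  have hle : LinearMap.ker M.mulVecLin ≤ LinearMap.ker N.mulVecLin := fun v hv => hker v hv
  have heq : LinearMap.ker M.mulVecLin = LinearMap.ker N.mulVecLin := by
    refine Submodule.eq_of_le_of_finrank_le hle ?_
    have h1 := M.mulVecLin.finrank_range_add_finrank_ker
    have h2 := N.mulVecLin.finrank_range_add_finrank_ker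
    unfold Matrix.rank at hrank
    lia
  ext i j
  have hj : V.col j ∈ LinearMap.ker N.mulVecLin := by
    ext l
    exact congrFun (congrFun hV l) j
  rw [← heq] at hj
  exact congrFun hj i

/-- Self-consistency of exact rank-`k` structure: if `X = [[A,B],[C,D]]` has rank `k` and
`D` has rank `k`, then `A = B Z C` for every generalized inverse `Z` of `D`
(i.e. every `Z` with `D Z D = D`, in particular the Moore–Penrose pseudoinverse). -/
theorem stmt_4 {r m s q : ℕ} (k : ℕ)
    (A : Matrix (Fin r) (Fin s) ℝ) (B : Matrix (Fin r) (Fin q) ℝ)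
    (C : Matrix (Fin m) (Fin s) ℝ) (D : Matrix (Fin m) (Fin q) ℝ)
    (hX : (Matrix.fromBlocks A B C D).rank = k)
    (hD : D.rank = k) :
    ∀ Z : Matrix (Fin q) (Fin m) ℝ, D * Z * D = D → A = B * Z * C := by
  intro Z hZ
  have hrowX : (fromCols C D).rank ≤ (fromBlocks A B C D).rank :=
    rank_submatrix_le (fromBlocks A B C D) Sum.inr id
  have hDrow : D.rank ≤ (fromCols C D).rank :=
    rank_submatrix_le (fromCols C D) id Sum.inr
  have hC : C = D * Z * C := by
    have h := mul_eq_zero_of_rank_le (fromCols C D)ᵀ Dᵀ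
      (fun v hv => by
        rw [transpose_fromCols, fromRows_mulVec] at hv
        ext i
        exact congrFun hv (Sum.inr i))
      (by rw [rank_transpose, rank_transpose]; lia) (1 - D * Z)ᵀ
      (by rw [← transpose_mul, Matrix.sub_mul, hZ, Matrix.one_mul, sub_self, transpose_zero])
    rw [← transpose_mul, transpose_eq_zero, mul_fromCols, ← fromCols_zero] at h
    have h1 := (fromCols_inj h).1
    rwa [Matrix.sub_mul, Matrix.one_mul, sub_eq_zero] at h1
  have h := mul_eq_zero_of_rank_le (fromBlocks A B C D) (fromCols C D)
    (fun v hv => by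
      ext i
      exact congrFun hv (Sum.inr i))
    (by lia) (fromRows 1 (-(Z * C)))
    (by rw [fromCols_mul_fromRows, Matrix.mul_one, Matrix.mul_neg, ← Matrix.mul_assoc, ← hC,
          add_neg_cancel])
  rw [fromBlocks_mul_fromRows, ← fromRows_zero] at h
  have h1 := (fromRows_inj h).1
  rwa [Matrix.mul_one, Matrix.mul_neg, ← Matrix.mul_assoc, add_neg_eq_zero] at h1
end
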